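/- Suppose δ > 0 and C ≥ 0 are constants such that 2δ < e⁴ and, for every n ≥ 1, every full-rank lattice L in ℝⁿ contains a nonzero vector x with ‖x‖₁ ≤ (n/δ + C·log n)·det(L)^{1/n}. Then there are infinitely many abc triples (a,b,c) satisfying exp(4·√(2(δ/e)·log c)/log log c)·rad(abc) ≤ c; that is, for every real N there exists such a triple with c > N. -/

import Mathlib

/-- The radical of a positive integer: the product of its distinct prime factors. -/
def rad (n : ℕ) : ℕ := n.primeFactors.prod id

/-!
The exponent vectors `e` with `∏ p ^ e p ≡ ±1 mod 2 ^ m`, for the odd primes `p ≤ x`, form a lattice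
of index at most `2 ^ (m - 2)`. Weight the coordinates by `log p` and append the coordinate
`∑ e p * log p`: if `∏ p ^ e p = U / V` in lowest terms, the `ℓ¹` norm becomes `2 * log (max U V)`.
A short vector thus gives an abc triple of bounded height formed from `U`, `V` and `U ± V`. As
`2 ^ m` divides `U ± V`, the quotient `c / rad (abc)` is at least `2 ^ m / (2 * ∏ p)`.

The constant in the exponent depends on the second-order terms of sums over primes. The bounds
on these are only needed for arbitrarily large `x`, and such `x` follow from Mertens' estimate
`log x - O(1) ≤ ∑ log p / p` instead of the prime number theorem: if the Riesz mean
`∑ log (x / p)` were always too small, two summations by parts would contradict it.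
-/

section ShortVectors

variable {ι : Type*} [Fintype ι]

/-- The hypothesis of the theorem with a general factor: every full-rank lattice `L` in `ℝⁿ`,
given by a basis `b`, contains a nonzero `x` with `‖x‖₁ ≤ F n * det(L)^(1/n)`. -/
def ShortVectorBound (F : ℕ → ℝ) : Prop :=
  ∀ n : ℕ, 1 ≤ n → ∀ b : Fin n → Fin n → ℝ, (Matrix.of b).det ≠ 0 →
    ∃ x ∈ Submodule.span ℤ (Set.range b), x ≠ 0 ∧
      ∑ i, |x i| ≤ F n * |(Matrix.of b).det| ^ ((1 : ℝ) / n)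

lemma ShortVectorBound.exists_mulVec_le {F : ℕ → ℝ} (hF : ShortVectorBound F)
    [DecidableEq ι] [Nonempty ι] {B : Matrix ι ι ℝ} (hB : B.det ≠ 0) :
    ∃ c : ι → ℤ, c ≠ 0 ∧ ∑ i, |B.mulVec (fun j ↦ (c j : ℝ)) i| ≤
      F (Fintype.card ι) * |B.det| ^ ((1 : ℝ) / Fintype.card ι) := by
  let e := Fintype.equivFin ι
  have hdet : (Matrix.of (Matrix.reindex e e B.transpose)).det = B.det :=
    (Matrix.det_reindex_self e B.transpose).trans B.det_transpose
  obtain ⟨x, hx, hx0, hle⟩ := hF _ Fintype.card_pos (Matrix.reindex e e B.transpose) (by rwa [hdet])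
  obtain ⟨c, rfl⟩ := Submodule.mem_span_range_iff_exists_fun ℤ |>.mp hx
  refine ⟨c ∘ e, fun hc ↦ hx0 ?_, ?_⟩
  · have hc' : c = 0 := e.surjective.injective_comp_right hc
    simp [hc']
  · rw [hdet] at hle
    refine le_of_eq_of_le ?_ hle
    refine Fintype.sum_equiv e _ _ fun i ↦ ?_
    simp [Matrix.mulVec, dotProduct, ← Equiv.sum_comp e, mul_comm]

lemma exists_intMatrix_of_index_ne_zero [DecidableEq ι] {H : AddSubgroup (ι → ℤ)}
    (hH : H.index ≠ 0) :
    ∃ V : Matrix ι ι ℤ, V.det.natAbs = H.index ∧ ∀ c, V.mulVec c ∈ H := by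
  obtain ⟨φ⟩ := Int.addSubgroup_index_ne_zero_iff.mp hH
  let b : Module.Basis ι ℤ H := Module.Basis.ofEquivFun φ.toIntLinearEquiv
  refine ⟨(Pi.basisFun ℤ ι).toMatrix fun j ↦ (b j : ι → ℤ),
    (AddSubgroup.index_eq_natAbs_det (Pi.basisFun ℤ ι) H b).symm, fun c ↦ ?_⟩
  rw [Matrix.mulVec_eq_sum]
  refine H.sum_mem fun j _ ↦ ?_
  have hcol : ((Pi.basisFun ℤ ι).toMatrix fun j ↦ (b j : ι → ℤ)).transpose j = b j := by
    ext i; simp [Module.Basis.toMatrix_apply]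
  simpa [hcol] using H.zsmul_mem (b j).2 (c j)

lemma ShortVectorBound.exists_mem_mulVec_le {F : ℕ → ℝ} (hF : ShortVectorBound F)
    [DecidableEq ι] [Nonempty ι] {H : AddSubgroup (ι → ℤ)} (hH : H.index ≠ 0)
    {B : Matrix ι ι ℝ} (hB : B.det ≠ 0) :
    ∃ z ∈ H, z ≠ 0 ∧ ∑ i, |B.mulVec (fun j ↦ (z j : ℝ)) i| ≤
      F (Fintype.card ι) * (|B.det| * H.index) ^ ((1 : ℝ) / Fintype.card ι) := by
  obtain ⟨V, hVdet, hVmem⟩ := exists_intMatrix_of_index_ne_zero hH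
  have hV : V.det ≠ 0 := by rwa [← Int.natAbs_ne_zero, hVdet]
  have hdet : (B * V.map ((↑) : ℤ → ℝ)).det = B.det * V.det := by
    rw [Matrix.det_mul, Int.cast_det]
  obtain ⟨c, hc0, hle⟩ := hF.exists_mulVec_le (B := B * V.map ((↑) : ℤ → ℝ))
    (by rw [hdet]; exact mul_ne_zero hB (by exact_mod_cast hV))
  refine ⟨V.mulVec c, hVmem c, fun h ↦ hc0 (Matrix.eq_zero_of_mulVec_eq_zero hV h), ?_⟩
  have hcast : (fun j ↦ ((V.mulVec c j : ℤ) : ℝ)) =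
      (V.map ((↑) : ℤ → ℝ)).mulVec (fun j ↦ (c j : ℝ)) := by
    ext j; simp [Matrix.mulVec, dotProduct]
  rw [hcast, Matrix.mulVec_mulVec, ← hVdet, Nat.cast_natAbs, Int.cast_abs, ← abs_mul, ← hdet]
  exact hle

lemma eq_zero_of_abs_add_abs_add_mul_lt {x t : ℝ} {n : ℤ} (h : |x| + |x + t * n| < t) :
    n = 0 := by
  by_contra hn
  have ht : 0 < t := (add_nonneg (abs_nonneg _) (abs_nonneg _)).trans_lt h
  have htn : t ≤ |t * n| := by
    rw [abs_mul, abs_of_pos ht]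
    exact le_mul_of_one_le_right ht.le (by exact_mod_cast Int.one_le_abs hn)
  have htri := abs_sub (x + t * n) x
  rw [add_sub_cancel_left] at htri
  linarith

-- The extra coordinate `t * z₀ + ∑ w e`, of size at least `t > B` when `z₀ ≠ 0`, forces `z₀ = 0`.
lemma ShortVectorBound.exists_mem_abs_sum_add_sum_abs_le {F : ℕ → ℝ} (hF : ShortVectorBound F)
    {H : AddSubgroup (ι → ℤ)} (hH : H.index ≠ 0) {w : ι → ℝ} (hw : ∀ i, 0 < w i) {t B : ℝ}
    (hB : F (Fintype.card ι + 1) *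
      (t * H.index * ∏ i, w i) ^ ((1 : ℝ) / ↑(Fintype.card ι + 1)) ≤ B) (ht : 0 < t) (hBt : B < t) :
    ∃ e ∈ H, e ≠ 0 ∧ |∑ i, w i * e i| + ∑ i, w i * |(e i : ℝ)| ≤ B := by
  classical
  let M : Matrix (ι ⊕ Unit) (ι ⊕ Unit) ℝ :=
    .fromBlocks (.diagonal w) 0 (.of fun _ ↦ w) (.diagonal fun _ ↦ t)
  have hdet : M.det = (∏ i, w i) * t := by simp [M, Matrix.det_fromBlocks_zero₁₂]
  have hMpos : 0 < M.det := hdet ▸ mul_pos (Finset.prod_pos fun i _ ↦ hw i) ht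
  let r : (ι ⊕ Unit → ℤ) →+ (ι → ℤ) := (LinearMap.funLeft ℤ ℤ Sum.inl).toAddMonoidHom
  have hr : (H.comap r).index = H.index :=
    AddSubgroup.index_comap_of_surjective _ (LinearMap.funLeft_surjective_of_injective ℤ ℤ _
      Sum.inl_injective)
  obtain ⟨z, hz, hz0, hle⟩ := hF.exists_mem_mulVec_le (hr ▸ hH) hMpos.ne'
  replace hle : ∑ i, w i * |(z (.inl i) : ℝ)| +
      |∑ i, w i * (z (.inl i) : ℝ) + t * (z (.inr ()) : ℝ)| ≤ B := by
    refine le_trans (le_of_eq_of_le ?_ hle) (le_of_eq_of_le ?_ hB)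
    · simp [M, Matrix.mulVec, dotProduct, Fintype.sum_sum_type, Matrix.diagonal_apply, abs_mul,
        abs_of_pos (hw _)]
    · rw [hr, abs_of_pos hMpos, hdet, Fintype.card_sum, Fintype.card_unit]
      ring_nf
  have hsum : |∑ i, w i * (z (.inl i) : ℝ)| ≤ ∑ i, w i * |(z (.inl i) : ℝ)| :=
    (Finset.abs_sum_le_sum_abs _ _).trans_eq <| by simp [abs_mul, abs_of_pos (hw _)]
  have hlast : z (.inr ()) = 0 :=
    eq_zero_of_abs_add_abs_add_mul_lt (((add_le_add_left hsum _).trans hle).trans_lt hBt)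
  refine ⟨r z, hz, fun h ↦ hz0 ?_, ?_⟩
  · ext (i | _)
    · exact congrFun h i
    · exact hlast
  · rw [hlast, Int.cast_zero, mul_zero, add_zero, add_comm] at hle
    exact hle

end ShortVectors

section Radical

lemma rad_eq_radical (n : ℕ) : rad n = UniqueFactorizationMonoid.radical n :=
  Nat.radical_eq_prod_primeFactors.symm

lemma rad_pos (n : ℕ) : 0 < rad n :=
  Finset.prod_pos fun _ hp ↦ (Nat.prime_of_mem_primeFactors hp).pos

lemma rad_mul_le (m n : ℕ) : rad (m * n) ≤ rad m * rad n := by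
  have hpos := Nat.mul_pos (rad_pos m) (rad_pos n)
  simp only [rad_eq_radical] at hpos ⊢
  exact Nat.le_of_dvd hpos UniqueFactorizationMonoid.radical_mul_dvd

lemma rad_le_self {n : ℕ} (hn : n ≠ 0) : rad n ≤ n :=
  rad_eq_radical n ▸ Nat.le_of_dvd hn.bot_lt UniqueFactorizationMonoid.radical_dvd_self

lemma rad_prod_pow_le {ι : Type*} (s : Finset ι) {p : ι → ℕ} (hp : ∀ i ∈ s, p i ≠ 0)
    (k : ι → ℕ) : rad (∏ i ∈ s, p i ^ k i) ≤ ∏ i ∈ s, p i := by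
  induction s using Finset.cons_induction with
  | empty => simp [rad]
  | cons i s hi ih =>
    simp only [Finset.mem_cons, forall_eq_or_imp] at hp
    rw [Finset.prod_cons, Finset.prod_cons]
    refine (rad_mul_le _ _).trans (Nat.mul_le_mul ?_ (ih hp.2))
    have hdvd : UniqueFactorizationMonoid.radical (p i ^ k i) ∣ p i :=
      UniqueFactorizationMonoid.radical_pow_dvd.trans UniqueFactorizationMonoid.radical_dvd_self
    exact rad_eq_radical _ ▸ Nat.le_of_dvd hp.1.bot_lt hdvd

lemma rad_mul_mul_le_of_dvd (n : ℕ) {m w : ℕ} (hmw : m ∣ w) (hw : w ≠ 0) :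
    rad (n * w) * m ≤ rad n * rad m * w := by
  obtain ⟨k, rfl⟩ := hmw
  calc rad (n * (m * k)) * m
      ≤ rad n * (rad m * k) * m := by
        gcongr
        refine (rad_mul_le _ _).trans (Nat.mul_le_mul_left _ <| (rad_mul_le _ _).trans ?_)
        exact Nat.mul_le_mul_left _ (rad_le_self (right_ne_zero_of_mul hw))
    _ = rad n * rad m * (m * k) := by ring

/-- Coprime positive integers `a`, `b` together with their sum `c`. -/
structure IsABCTriple (a b c : ℕ) : Prop where
  left_pos : 0 < a
  right_pos : 0 < b
  coprime : Nat.gcd a b = 1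
  add_eq : a + b = c

lemma exists_abcTriple_of_dvd_add {U V M : ℕ} (hU : 0 < U) (hV : 0 < V) (hUV : U.Coprime V)
    (hM : M ∣ U + V) :
    ∃ a b c, IsABCTriple a b c ∧ M ≤ c ∧ c ≤ 2 * max U V ∧
      rad (a * b * c) * M ≤ rad M * rad (U * V) * c := by
  refine ⟨U, V, U + V, ⟨hU, hV, hUV, rfl⟩, Nat.le_of_dvd (by lia) hM, by lia, ?_⟩
  simpa only [mul_comm (rad M)] using rad_mul_mul_le_of_dvd (U * V) hM (by lia)

lemma exists_abcTriple_of_dvd_sub {U V M : ℕ} (hV : 0 < V) (hVU : V < U) (hUV : U.Coprime V)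
    (hM : M ∣ U - V) :
    ∃ a b c, IsABCTriple a b c ∧ M ≤ c ∧ c ≤ 2 * max U V ∧
      rad (a * b * c) * M ≤ rad M * rad (U * V) * c := by
  have hsub : 0 < U - V := Nat.sub_pos_of_lt hVU
  refine ⟨U - V, V, U, ⟨hsub, hV, (Nat.coprime_sub_self_left hVU.le).mpr hUV, by lia⟩,
    (Nat.le_of_dvd hsub hM).trans (Nat.sub_le _ _), by lia, ?_⟩
  calc rad ((U - V) * V * U) * M = rad (U * V * (U - V)) * M := by congr 2; ring
    _ ≤ rad (U * V) * rad M * (U - V) := rad_mul_mul_le_of_dvd _ hM hsub.ne'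
    _ ≤ rad (U * V) * rad M * U := Nat.mul_le_mul_left _ (Nat.sub_le _ _)
    _ = rad M * rad (U * V) * U := by ring

lemma exists_abcTriple_of_dvd_sub_or_dvd_add {U V M : ℕ} (hU : 0 < U) (hV : 0 < V)
    (hUV : U.Coprime V) (hne : U ≠ V) (hM : (M : ℤ) ∣ U - V ∨ (M : ℤ) ∣ U + V) :
    ∃ a b c, IsABCTriple a b c ∧ M ≤ c ∧ c ≤ 2 * max U V ∧
      rad (a * b * c) * M ≤ rad M * rad (U * V) * c := by
  rcases hM with hM | hM
  · rcases hne.lt_or_gt with h | h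
    · rw [max_comm, mul_comm U V]
      refine exists_abcTriple_of_dvd_sub hU h hUV.symm ?_
      rwa [← Int.natCast_dvd_natCast, Nat.cast_sub h.le, ← Int.dvd_neg, neg_sub]
    · refine exists_abcTriple_of_dvd_sub hV h hUV ?_
      rwa [← Int.natCast_dvd_natCast, Nat.cast_sub h.le]
  · exact exists_abcTriple_of_dvd_add hU hV hUV (by exact_mod_cast hM)

end Radical

section Relations

variable {ι : Type*} [Fintype ι]

/-- The exponent vectors `e` for which the monomial `∏ u i ^ e i` lies in `K`. -/
def relationSubgroup {G : Type*} [CommGroup G] (u : ι → G) (K : Subgroup G) :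
    AddSubgroup (ι → ℤ) :=
  K.toAddSubgroup.comap <| AddMonoidHom.mk' (fun e ↦ Additive.ofMul (∏ i, u i ^ e i))
    fun e f ↦ by simp [zpow_add, Finset.prod_mul_distrib]

lemma mem_relationSubgroup {G : Type*} [CommGroup G] {u : ι → G} {K : Subgroup G} {e : ι → ℤ} :
    e ∈ relationSubgroup u K ↔ ∏ i, u i ^ e i ∈ K :=
  Iff.rfl

lemma index_relationSubgroup_dvd {G : Type*} [CommGroup G] (u : ι → G) (K : Subgroup G) :
    (relationSubgroup u K).index ∣ K.index := by
  rw [relationSubgroup, AddSubgroup.index_comap, ← Subgroup.index_toAddSubgroup]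
  exact AddSubgroup.relIndex_dvd_index_of_normal _ _

lemma two_mul_index_zpowers_neg_one {M : ℕ} (hM : 2 < M) :
    2 * (Subgroup.zpowers (-1 : (ZMod M)ˣ)).index = M.totient := by
  have : Fact (2 < M) := ⟨hM⟩
  have : NeZero M := ⟨by lia⟩
  have hord : orderOf (-1 : (ZMod M)ˣ) = 2 := by
    have : Nontrivial (ZMod M) := ZMod.nontrivial_iff.mpr (by lia)
    rw [← orderOf_units, Units.val_neg, Units.val_one, orderOf_neg_one, ZMod.ringChar_zmod_n,
      if_neg hM.ne']
  rw [← ZMod.card_units_eq_totient, ← Nat.card_eq_fintype_card, ← hord, ← Nat.card_zpowers,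
    Subgroup.card_mul_index]

/-- The numerator of the rational number `∏ p i ^ e i`, for pairwise coprime `p i`. Its denominator
is `numProd p (-e)`. -/
def numProd (p : ι → ℕ) (e : ι → ℤ) : ℕ :=
  ∏ i, p i ^ (e i).toNat

variable {p : ι → ℕ} {e : ι → ℤ}

lemma numProd_pos (hp : ∀ i, 0 < p i) : 0 < numProd p e :=
  Finset.prod_pos fun i _ ↦ pow_pos (hp i) _

lemma log_numProd (hp : ∀ i, 0 < p i) :
    Real.log (numProd p e) = ∑ i, (e i).toNat * Real.log (p i) := by
  rw [numProd, Nat.cast_prod, Real.log_prod fun i _ ↦ by have := (hp i).ne'; positivity]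
  simp

lemma log_numProd_sub (hp : ∀ i, 0 < p i) :
    Real.log (numProd p e) - Real.log (numProd p (-e)) = ∑ i, Real.log (p i) * e i := by
  rw [log_numProd hp, log_numProd hp, ← Finset.sum_sub_distrib]
  refine Finset.sum_congr rfl fun i _ ↦ ?_
  rw [← sub_mul, mul_comm, Pi.neg_apply]
  congr 1
  exact_mod_cast Int.toNat_sub_toNat_neg (e i)

lemma log_numProd_add (hp : ∀ i, 0 < p i) :
    Real.log (numProd p e) + Real.log (numProd p (-e)) = ∑ i, Real.log (p i) * |(e i : ℝ)| := by
  rw [log_numProd hp, log_numProd hp, ← Finset.sum_add_distrib]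
  refine Finset.sum_congr rfl fun i _ ↦ ?_
  rw [← add_mul, mul_comm, Pi.neg_apply, ← Int.cast_abs, ← Nat.cast_natAbs]
  congr 1
  exact_mod_cast Int.toNat_add_toNat_neg_eq_natAbs (e i)

lemma two_mul_log_max_numProd (hp : ∀ i, 0 < p i) :
    2 * Real.log (max (numProd p e) (numProd p (-e)) : ℕ) =
      |∑ i, Real.log (p i) * e i| + ∑ i, Real.log (p i) * |(e i : ℝ)| := by
  rw [← log_numProd_sub hp, ← log_numProd_add hp]
  have hpos (f : ι → ℤ) : (0 : ℝ) < numProd p f := by exact_mod_cast numProd_pos hp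
  rcases le_total (numProd p e) (numProd p (-e)) with h | h
  · have hlog := Real.log_le_log (hpos _) (Nat.cast_le.mpr h)
    rw [max_eq_right h, abs_of_nonpos (by linarith)]
    ring
  · have hlog := Real.log_le_log (hpos _) (Nat.cast_le.mpr h)
    rw [max_eq_left h, abs_of_nonneg (by linarith)]
    ring

lemma coprime_numProd (hp : Pairwise (Function.onFun Nat.Coprime p)) :
    (numProd p e).Coprime (numProd p (-e)) := by
  refine Nat.Coprime.prod_left fun i _ ↦ Nat.Coprime.prod_right fun j _ ↦ ?_
  rcases eq_or_ne i j with rfl | hij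
  · rcases le_total (e i) 0 with h | h
    · simp [Int.toNat_of_nonpos h]
    · simp [Int.toNat_of_nonpos (neg_nonpos.mpr h)]
  · exact (hp hij).pow _ _

lemma numProd_ne_numProd_neg (hp : ∀ i, 1 < p i) (hcop : Pairwise (Function.onFun Nat.Coprime p))
    (he : e ≠ 0) : numProd p e ≠ numProd p (-e) := by
  have hp0 (i) : 0 < p i := zero_lt_one.trans (hp i)
  intro heq
  have hone : numProd p e = 1 := by
    have := coprime_numProd (e := e) hcop
    rwa [← heq, Nat.coprime_self] at this
  have hsum := log_numProd_add (e := e) hp0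
  have hlog (i) : 0 < Real.log (p i) := Real.log_pos (by exact_mod_cast hp i)
  rw [← heq, hone, Nat.cast_one, Real.log_one, add_zero, eq_comm,
    Finset.sum_eq_zero_iff_of_nonneg fun i _ ↦ mul_nonneg (hlog i).le (abs_nonneg _)] at hsum
  exact he <| funext fun i ↦ by simpa [(hlog i).ne'] using hsum i (Finset.mem_univ i)

lemma rad_numProd_mul_le (hp : ∀ i, 0 < p i) :
    rad (numProd p e * numProd p (-e)) ≤ ∏ i, p i := by
  simp only [numProd, ← Finset.prod_mul_distrib, ← pow_add]
  exact rad_prod_pow_le _ (fun i _ ↦ (hp i).ne') _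

lemma dvd_numProd_sub_or_dvd_add {M : ℕ} (hcop : ∀ i, (p i).Coprime M)
    (he : e ∈ relationSubgroup (fun i ↦ ZMod.unitOfCoprime (p i) (hcop i))
      (Subgroup.zpowers (-1))) :
    (M : ℤ) ∣ numProd p e - numProd p (-e) ∨ (M : ℤ) ∣ numProd p e + numProd p (-e) := by
  set u : ι → (ZMod M)ˣ := fun i ↦ ZMod.unitOfCoprime (p i) (hcop i)
  have hval (f : ι → ℤ) : ((∏ i, u i ^ (f i).toNat : (ZMod M)ˣ) : ZMod M) = numProd p f := by
    simp [u, numProd]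
  have hquot : ∏ i, u i ^ (e i).toNat = (∏ i, u i ^ e i) * ∏ i, u i ^ ((-e) i).toNat := by
    rw [← Finset.prod_mul_distrib]
    refine Finset.prod_congr rfl fun i _ ↦ ?_
    rw [← zpow_natCast, ← zpow_natCast, ← zpow_add, Pi.neg_apply]
    congr 1
    linarith [Int.toNat_sub_toNat_neg (e i)]
  have hsign : ∏ i, u i ^ e i = 1 ∨ ∏ i, u i ^ e i = -1 := by
    obtain ⟨k, hk⟩ := Subgroup.mem_zpowers_iff.mp (mem_relationSubgroup.mp he)
    rw [← hk]
    rcases Int.even_or_odd k with h | h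
    · exact .inl (by rw [h.neg_zpow, one_zpow])
    · exact .inr (by rw [h.neg_zpow, one_zpow])
  have hcast := congrArg (Units.val : (ZMod M)ˣ → ZMod M) hquot
  rw [Units.val_mul, hval, hval] at hcast
  refine hsign.imp (fun h ↦ ?_) fun h ↦ ?_ <;>
  · rw [← ZMod.intCast_zmod_eq_zero_iff_dvd]
    simp [hcast, h]

lemma ShortVectorBound.exists_abcTriple {F : ℕ → ℝ} (hF : ShortVectorBound F)
    (hp : ∀ i, (p i).Prime) (hinj : p.Injective) {M : ℕ} (hM : 2 < M)
    (hcop : ∀ i, (p i).Coprime M) {t B : ℝ} (hF0 : 0 ≤ F (Fintype.card ι + 1))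
    (hB : F (Fintype.card ι + 1) *
      (t * (M.totient / 2) * ∏ i, Real.log (p i)) ^ ((1 : ℝ) / ↑(Fintype.card ι + 1)) ≤ B)
    (ht : 0 < t) (hBt : B < t) :
    ∃ a b c, IsABCTriple a b c ∧ M ≤ c ∧ Real.log c ≤ B / 2 + Real.log 2 ∧
      rad (a * b * c) * M ≤ rad M * (∏ i, p i) * c := by
  have hpair : Pairwise (Function.onFun Nat.Coprime p) := fun i j hij ↦
    (Nat.coprime_primes (hp i) (hp j)).mpr (hinj.ne hij)
  have hp0 (i) : 0 < p i := (hp i).pos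
  have hlog (i) : 0 < Real.log (p i) := Real.log_pos (by exact_mod_cast (hp i).one_lt)
  set H := relationSubgroup (fun i ↦ ZMod.unitOfCoprime (p i) (hcop i)) (Subgroup.zpowers (-1))
  have hK := two_mul_index_zpowers_neg_one hM
  have hKpos : 0 < (Subgroup.zpowers (-1 : (ZMod M)ˣ)).index := by
    have := Nat.totient_pos.mpr (zero_lt_two.trans hM)
    lia
  have hH : H.index ∣ (Subgroup.zpowers (-1 : (ZMod M)ˣ)).index := index_relationSubgroup_dvd _ _
  have hindex : (H.index : ℝ) ≤ M.totient / 2 := by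
    rw [← hK, Nat.cast_mul, Nat.cast_ofNat, mul_div_cancel_left₀ _ two_ne_zero]
    exact_mod_cast Nat.le_of_dvd hKpos hH
  obtain ⟨e, heH, he0, hle⟩ := hF.exists_mem_abs_sum_add_sum_abs_le
    (ne_zero_of_dvd_ne_zero hKpos.ne' hH) hlog (le_trans (by gcongr) hB) ht hBt
  rw [← two_mul_log_max_numProd hp0] at hle
  obtain ⟨a, b, c, habc, hMc, hc, hrad⟩ := exists_abcTriple_of_dvd_sub_or_dvd_add
    (numProd_pos hp0) (numProd_pos hp0) (coprime_numProd hpair)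
    (numProd_ne_numProd_neg (fun i ↦ (hp i).one_lt) hpair he0) (dvd_numProd_sub_or_dvd_add hcop heH)
  refine ⟨a, b, c, habc, hMc, ?_, hrad.trans ?_⟩
  · have hmax : max (numProd p e) (numProd p (-e)) ≠ 0 :=
      (lt_max_of_lt_left (numProd_pos hp0)).ne'
    have hlogc : Real.log c ≤ Real.log (2 * max (numProd p e) (numProd p (-e)) : ℕ) :=
      Real.log_le_log (by exact_mod_cast (zero_lt_two.trans hM).trans_le hMc) (by exact_mod_cast hc)
    rw [Nat.cast_mul, Real.log_mul (by norm_num) (by exact_mod_cast hmax), Nat.cast_ofNat] at hlogc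
    linarith
  · gcongr
    exact rad_numProd_mul_le hp0

lemma exp_sum_log {α : Type*} {s : Finset α} {f : α → ℝ} (hf : ∀ a ∈ s, 0 < f a) :
    Real.exp (∑ a ∈ s, Real.log (f a)) = ∏ a ∈ s, f a := by
  rw [Real.exp_sum]
  exact Finset.prod_congr rfl fun a ha ↦ Real.exp_log (hf a ha)

lemma totient_two_pow_add_two_div_two (k : ℕ) : ((2 ^ (k + 2)).totient : ℝ) / 2 = 2 ^ k := by
  rw [Nat.totient_prime_pow_succ Nat.prime_two]
  push_cast
  ring

lemma rad_two_pow {k : ℕ} (hk : k ≠ 0) : rad (2 ^ k) = 2 := by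
  rw [rad, Nat.primeFactors_prime_pow hk Nat.prime_two, Finset.prod_singleton, id]

lemma ShortVectorBound.exists_abcTriple_two_pow {F : ℕ → ℝ} (hF : ShortVectorBound F)
    {P : Finset ℕ} (hP : ∀ p ∈ P, p.Prime ∧ p ≠ 2) (k : ℕ) {t B : ℝ} (hF0 : 0 ≤ F (P.card + 1))
    (hB : F (P.card + 1) *
      (t * 2 ^ k * ∏ p ∈ P, Real.log p) ^ ((1 : ℝ) / ↑(P.card + 1)) ≤ B)
    (ht : 0 < t) (hBt : B < t) :
    ∃ a b c, IsABCTriple a b c ∧ 2 ^ (k + 2) ≤ c ∧ Real.log c ≤ B / 2 + Real.log 2 ∧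
      rad (a * b * c) * 2 ^ (k + 2) ≤ 2 * (∏ p ∈ P, p) * c := by
  have hM : 2 < 2 ^ (k + 2) :=
    lt_of_lt_of_le (by norm_num) (Nat.pow_le_pow_right two_pos (Nat.le_add_left 2 k))
  have hcop (p : P) : (p : ℕ).Coprime (2 ^ (k + 2)) :=
    ((Nat.coprime_primes (hP p p.2).1 Nat.prime_two).mpr (hP p p.2).2).pow_right _
  obtain ⟨a, b, c, habc, hMc, hlogc, hrad⟩ := hF.exists_abcTriple (p := ((↑) : P → ℕ))
    (fun p ↦ (hP p p.2).1) Subtype.val_injective hM hcop (by rwa [Fintype.card_coe])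
    (by rwa [totient_two_pow_add_two_div_two, Fintype.card_coe,
      Finset.prod_coe_sort P fun p ↦ Real.log p]) ht hBt
  rw [rad_two_pow (by lia), Finset.prod_coe_sort P fun p ↦ p] at hrad
  exact ⟨a, b, c, habc, hMc, hlogc, hrad⟩

-- The modulus is the largest power of two up to `4 * exp (G + ∑ log p)`.
lemma ShortVectorBound.exists_abcTriple_exp_mul_rad_le {F : ℕ → ℝ} (hF : ShortVectorBound F)
    {P : Finset ℕ} (hP : ∀ p ∈ P, p.Prime ∧ p ≠ 2) {G t B : ℝ} (hG : 0 ≤ G)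
    (hF0 : 0 ≤ F (P.card + 1))
    (hB : F (P.card + 1) * Real.exp ((Real.log t + ∑ p ∈ P, (Real.log p + Real.log (Real.log p)) +
      G) / (P.card + 1)) ≤ B) (ht : 0 < t) (hBt : B < t) :
    ∃ a b c, IsABCTriple a b c ∧ G ≤ Real.log c ∧ Real.log c ≤ B / 2 + Real.log 2 ∧
      Real.exp G * rad (a * b * c) ≤ c := by
  have hp0 (p) (hp : p ∈ P) : (0 : ℝ) < p := by exact_mod_cast (hP p hp).1.pos
  have hlog (p) (hp : p ∈ P) : 0 < Real.log p :=
    Real.log_pos (by exact_mod_cast (hP p hp).1.one_lt)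
  set θ := ∑ p ∈ P, Real.log p with hθ
  have hθ0 : 0 ≤ θ := Finset.sum_nonneg fun p hp ↦ (hlog p hp).le
  obtain ⟨k, hk_le, hk_lt⟩ := exists_nat_pow_near (y := (2 : ℝ))
    (Real.one_le_exp (add_nonneg hG hθ0)) one_lt_two
  have hvol : (t * 2 ^ k * ∏ p ∈ P, Real.log p) ^ ((1 : ℝ) / ↑(P.card + 1)) ≤
      Real.exp ((Real.log t + ∑ p ∈ P, (Real.log p + Real.log (Real.log p)) + G) /
        (P.card + 1)) := by
    have hexp : t * Real.exp (G + θ) * ∏ p ∈ P, Real.log p =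
        Real.exp (Real.log t + ∑ p ∈ P, (Real.log p + Real.log (Real.log p)) + G) := by
      rw [Finset.sum_add_distrib, Real.exp_add, Real.exp_add, Real.exp_add, Real.exp_add,
        Real.exp_log ht, exp_sum_log hlog]
      ring
    rw [Nat.cast_add_one, div_eq_mul_one_div (_ + G), Real.exp_mul, ← hexp]
    have hprod := Finset.prod_nonneg fun p hp ↦ (hlog p hp).le
    gcongr
  obtain ⟨a, b, c, habc, hMc, hlogc, hrad⟩ :=
    hF.exists_abcTriple_two_pow hP k hF0 (le_trans (by gcongr) hB) ht hBt
  have hexpc : Real.exp G ≤ c := calc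
    Real.exp G ≤ Real.exp (G + θ) := by gcongr; linarith
    _ ≤ 2 ^ (k + 1) := hk_lt.le
    _ ≤ 2 ^ (k + 2) := by gcongr <;> norm_num
    _ ≤ c := by exact_mod_cast hMc
  refine ⟨a, b, c, habc, (Real.le_log_iff_exp_le ((Real.exp_pos G).trans_le hexpc)).mpr hexpc,
    hlogc, le_of_mul_le_mul_right ?_ (mul_pos two_pos (Real.exp_pos θ))⟩
  have hrad' : (rad (a * b * c) : ℝ) * 2 ^ (k + 2) ≤ 2 * Real.exp θ * c := by
    rw [hθ, exp_sum_log hp0, ← Nat.cast_prod]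
    exact_mod_cast hrad
  calc Real.exp G * rad (a * b * c) * (2 * Real.exp θ)
      = rad (a * b * c) * (2 * Real.exp (G + θ)) := by rw [Real.exp_add]; ring
    _ ≤ rad (a * b * c) * (2 * 2 ^ (k + 1)) := by gcongr
    _ = rad (a * b * c) * 2 ^ (k + 2) := by ring
    _ ≤ c * (2 * Real.exp θ) := hrad'.trans_eq (mul_comm _ _)

end Relations

section Mertens

lemma factorization_factorial_le {p N : ℕ} (hp : p.Prime) (hN : N ≠ 0) :
    (N.factorial.factorization p : ℝ) ≤ N / (p - 1) := by
  have : Fact p.Prime := ⟨hp⟩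
  have hlt := sub_one_mul_padicValNat_factorial_lt_of_ne_zero p hN
  have hp1 : (1 : ℝ) < p := by exact_mod_cast hp.one_lt
  rw [Nat.factorization_def _ hp, le_div_iff₀' (by linarith), ← Nat.cast_one,
    ← Nat.cast_sub hp.one_le]
  exact_mod_cast hlt.le

lemma primeFactors_factorial (N : ℕ) : N.factorial.primeFactors = N.primesLE := by
  ext p
  simp only [Nat.mem_primeFactors, Nat.mem_primesLE, ne_eq, N.factorial_ne_zero, not_false_eq_true,
    and_true, and_comm (a := p ≤ N)]
  exact and_congr_right fun hp ↦ hp.dvd_factorial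

lemma log_factorial_le_mul_sum_primesLE {N : ℕ} (hN : N ≠ 0) :
    Real.log N.factorial ≤ N * ∑ p ∈ N.primesLE, Real.log p / (p - 1) := by
  have hlog : Real.log N.factorial =
      ∑ p ∈ N.primesLE, (N.factorial.factorization p : ℝ) * Real.log p := by
    rw [← primeFactors_factorial]
    exact Real.log_nat_eq_sum_factorization _
  rw [hlog, Finset.mul_sum]
  refine Finset.sum_le_sum fun p hp ↦ ?_
  rw [mul_div_left_comm, mul_comm]
  exact mul_le_mul_of_nonneg_left (factorization_factorial_le (Nat.prime_of_mem_primesLE hp) hN)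
    (Real.log_natCast_nonneg p)

lemma log_div_mul_sub_one_le {x : ℝ} (hx : 2 ≤ x) :
    Real.log x / (x * (x - 1)) ≤ 4 * (1 / x ^ (3 / 2 : ℝ)) := by
  have hlog : Real.log x ≤ 2 * x ^ (1 / 2 : ℝ) := by
    have := Real.log_le_rpow_div (x := x) (by linarith) (show (0 : ℝ) < 1 / 2 by norm_num)
    linarith
  have hpow : x ^ (1 / 2 : ℝ) * x ^ (3 / 2 : ℝ) = x ^ 2 := by
    rw [← Real.rpow_add (by linarith)]
    norm_num
  have hpos : 0 < x ^ (3 / 2 : ℝ) := Real.rpow_pos_of_pos (by linarith) _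
  rw [mul_one_div, div_le_div_iff₀ (by nlinarith) hpos]
  calc Real.log x * x ^ (3 / 2 : ℝ) ≤ 2 * x ^ (1 / 2 : ℝ) * x ^ (3 / 2 : ℝ) := by gcongr
    _ = 2 * x ^ 2 := by rw [mul_assoc, hpow]
    _ ≤ 4 * (x * (x - 1)) := by nlinarith

lemma exists_sum_log_div_mul_sub_one_le : ∃ K : ℝ, ∀ s : Finset ℕ, (∀ p ∈ s, 2 ≤ p) →
    ∑ p ∈ s, Real.log p / (p * (p - 1)) ≤ K := by
  have hs : Summable fun n : ℕ ↦ 4 * (1 / (n : ℝ) ^ (3 / 2 : ℝ)) :=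
    (Real.summable_one_div_nat_rpow.mpr (by norm_num)).mul_left 4
  refine ⟨_, fun s hsp ↦ (Finset.sum_le_sum fun p hp ↦ ?_).trans
    (hs.sum_le_tsum s fun _ _ ↦ by positivity)⟩
  exact log_div_mul_sub_one_le (by exact_mod_cast hsp p hp)

lemma exists_log_sub_le_sum_primesLE_log_div : ∃ K : ℝ, ∀ x : ℝ, 1 ≤ x →
    Real.log x - K ≤ ∑ p ∈ ⌊x⌋₊.primesLE, Real.log p / p := by
  obtain ⟨K, hK⟩ := exists_sum_log_div_mul_sub_one_le
  refine ⟨K + 1 + Real.log 2, fun x hx ↦ ?_⟩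
  set N := ⌊x⌋₊
  have hN : N ≠ 0 := (Nat.floor_pos.mpr hx).ne'
  have hN1 : (1 : ℝ) ≤ N := by exact_mod_cast hN.bot_lt
  have hfactorial : Real.log N - 1 ≤ ∑ p ∈ N.primesLE, Real.log p / (p - 1) := by
    refine le_of_mul_le_mul_left ?_ (zero_lt_one.trans_le hN1)
    have hpi : 0 ≤ Real.log (2 * Real.pi) := Real.log_nonneg (by linarith [Real.pi_gt_three])
    linarith [Stirling.le_log_factorial_stirling hN, log_factorial_le_mul_sum_primesLE hN,
      Real.log_nonneg hN1]
  have hsplit : ∑ p ∈ N.primesLE, Real.log p / ((p : ℝ) - 1) =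
      ∑ p ∈ N.primesLE, Real.log p / p + ∑ p ∈ N.primesLE, Real.log p / (p * (p - 1)) := by
    rw [← Finset.sum_add_distrib]
    refine Finset.sum_congr rfl fun p hp ↦ ?_
    have hp2 : (2 : ℝ) ≤ p := by exact_mod_cast Nat.two_le_of_mem_primesLE hp
    have hp1 : (p : ℝ) - 1 ≠ 0 := by linarith
    field_simp
    ring
  have htail := hK N.primesLE fun p hp ↦ Nat.two_le_of_mem_primesLE hp
  have hfloor : Real.log x ≤ Real.log N + Real.log 2 := by
    rw [← Real.log_mul (by positivity) two_ne_zero]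
    refine Real.log_le_log (by linarith) ?_
    linarith [Nat.lt_floor_add_one x]
  linarith

end Mertens

section RieszMean

open Filter

open Classical in
/-- The elements `a` of `A` with `1 ≤ a ≤ x`. -/
noncomputable def below (A : Set ℕ) (x : ℝ) : Finset ℕ :=
  (Finset.Icc 1 ⌊x⌋₊).filter (· ∈ A)

/-- The unnormalised logarithmic Riesz mean `∑_{a ≤ x} log (x / a)` of the counting function of `A`,
which is its integral with respect to `dx / x`. -/
noncomputable def rieszMean (A : Set ℕ) (x : ℝ) : ℝ :=
  ∑ a ∈ below A x, (Real.log x - Real.log a)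

variable {A : Set ℕ}

lemma mem_below {x : ℝ} {a : ℕ} : a ∈ below A x ↔ a ∈ A ∧ 0 < a ∧ (a : ℝ) ≤ x := by
  simp only [below, Finset.mem_filter, Finset.mem_Icc, and_comm (b := a ∈ A)]
  refine and_congr_right fun _ ↦ and_congr_right fun ha ↦ ?_
  exact Nat.le_floor_iff' (by lia)

lemma below_mono : Monotone (below A) := fun _ _ hxy _ ha ↦
  let ⟨haA, ha0, hax⟩ := mem_below.mp ha
  mem_below.mpr ⟨haA, ha0, hax.trans hxy⟩

lemma card_below_le {x : ℝ} (hx : 0 ≤ x) : ((below A x).card : ℝ) ≤ x := by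
  classical
  have hcard : (below A x).card ≤ ⌊x⌋₊ := by
    simpa [below] using Finset.card_filter_le (Finset.Icc 1 ⌊x⌋₊) (· ∈ A)
  exact (Nat.cast_le.mpr hcard).trans (Nat.floor_le hx)

lemma sum_max_sub_log_eq_rieszMean {t T : ℝ} (h : t ≤ T) :
    ∑ a ∈ below A (Real.exp T), max (t - Real.log a) 0 = rieszMean A (Real.exp t) := by
  rw [rieszMean, ← Finset.sum_subset (below_mono (Real.exp_le_exp.mpr h))]
  · refine Finset.sum_congr rfl fun a ha ↦ ?_
    obtain ⟨-, ha0, hat⟩ := mem_below.mp ha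
    have := (Real.log_le_iff_le_exp (Nat.cast_pos.mpr ha0)).mpr hat
    rw [Real.log_exp, max_eq_left (by linarith)]
  · intro a ha hat
    obtain ⟨haA, ha0, -⟩ := mem_below.mp ha
    have hlt : Real.exp t < a := by
      by_contra! hle
      exact hat (mem_below.mpr ⟨haA, ha0, hle⟩)
    have := (Real.lt_log_iff_exp_lt (Nat.cast_pos.mpr ha0)).mpr hlt
    exact max_eq_right (by linarith)

lemma continuous_rieszMean_exp : Continuous fun t ↦ rieszMean A (Real.exp t) := by
  refine continuous_iff_continuousAt.mpr fun t ↦ ?_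
  have hcont : Continuous fun s ↦
      ∑ a ∈ below A (Real.exp (t + 1)), max (s - Real.log a) 0 := by fun_prop
  refine hcont.continuousAt.congr ?_
  filter_upwards [eventually_le_nhds (lt_add_one t)] with s hs
  exact sum_max_sub_log_eq_rieszMean hs

lemma integral_max_sub_mul {f f' f'' : ℝ → ℝ} (hf : ∀ t, HasDerivAt f (f' t) t)
    (hf' : ∀ t, HasDerivAt f' (f'' t) t) (hcont : Continuous f'') {l T : ℝ} (hl : 0 ≤ l)
    (hlT : l ≤ T) :
    ∫ t in 0..T, max (t - l) 0 * f'' t = (T - l) * f' T - f T + f l := by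
  have hint (a b : ℝ) :
      IntervalIntegrable (fun t ↦ max (t - l) 0 * f'' t) MeasureTheory.volume a b :=
    Continuous.intervalIntegrable (by fun_prop) _ _
  have hleft : ∫ t in 0..l, max (t - l) 0 * f'' t = 0 := by
    refine intervalIntegral.integral_zero_ae (.of_forall fun t ht ↦ ?_)
    rw [Set.uIoc_of_le hl] at ht
    rw [max_eq_right (by linarith [ht.2]), zero_mul]
  have hright : ∫ t in l..T, max (t - l) 0 * f'' t = ∫ t in l..T, (t - l) * f'' t := by
    refine intervalIntegral.integral_congr fun t ht ↦ ?_
    rw [Set.uIcc_of_le hlT] at ht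
    simp only [max_eq_left (sub_nonneg.mpr ht.1)]
  have hprim : ∫ t in l..T, (t - l) * f'' t = (T - l) * f' T - f T - ((l - l) * f' l - f l) := by
    refine intervalIntegral.integral_eq_sub_of_hasDerivAt
      (f := fun t ↦ (t - l) * f' t - f t) (fun t _ ↦ ?_)
      (Continuous.intervalIntegrable (by fun_prop) _ _)
    refine ((((hasDerivAt_id t).sub_const l).mul (hf' t)).sub (hf t)).congr_deriv ?_
    simp only [id]
    ring
  rw [← intervalIntegral.integral_add_adjacent_intervals (hint 0 l) (hint l T), hleft, hright,
    hprim]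
  ring

lemma sum_below_eq_integral_rieszMean {f f' f'' : ℝ → ℝ} (hf : ∀ t, HasDerivAt f (f' t) t)
    (hf' : ∀ t, HasDerivAt f' (f'' t) t) (hcont : Continuous f'') {T : ℝ} (hT : 0 ≤ T) :
    ∑ a ∈ below A (Real.exp T), f (Real.log a) = (below A (Real.exp T)).card * f T -
      rieszMean A (Real.exp T) * f' T + ∫ t in 0..T, rieszMean A (Real.exp t) * f'' t := by
  have hint : ∫ t in 0..T, rieszMean A (Real.exp t) * f'' t =
      ∑ a ∈ below A (Real.exp T), ((T - Real.log a) * f' T - f T + f (Real.log a)) := calc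
    _ = ∫ t in 0..T, ∑ a ∈ below A (Real.exp T), max (t - Real.log a) 0 * f'' t := by
      refine intervalIntegral.integral_congr fun t ht ↦ ?_
      rw [Set.uIcc_of_le hT] at ht
      simp only [← Finset.sum_mul, sum_max_sub_log_eq_rieszMean ht.2]
    _ = ∑ a ∈ below A (Real.exp T), ∫ t in 0..T, max (t - Real.log a) 0 * f'' t :=
      intervalIntegral.integral_finsetSum fun _ _ ↦
        Continuous.intervalIntegrable (by fun_prop) _ _
    _ = _ := by
      refine Finset.sum_congr rfl fun a ha ↦ ?_
      obtain ⟨-, ha0, haT⟩ := mem_below.mp ha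
      exact integral_max_sub_mul hf hf' hcont (Real.log_natCast_nonneg a)
        ((Real.log_le_iff_le_exp (Nat.cast_pos.mpr ha0)).mpr haT)
  rw [hint, Finset.sum_add_distrib, Finset.sum_sub_distrib, ← Finset.sum_mul, rieszMean,
    Real.log_exp, Finset.sum_const, nsmul_eq_mul]
  ring

lemma sum_below_log_div_eq {T : ℝ} (hT : 0 ≤ T) :
    ∑ a ∈ below A (Real.exp T), Real.log a / a =
      (below A (Real.exp T)).card * T / Real.exp T +
        rieszMean A (Real.exp T) * (T - 1) / Real.exp T +
        ∫ t in 0..T, rieszMean A (Real.exp t) * ((t - 2) * Real.exp (-t)) := by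
  have hexp (t : ℝ) : HasDerivAt (fun t : ℝ ↦ Real.exp (-t)) (Real.exp (-t) * (-1)) t :=
    (hasDerivAt_neg t).exp
  have hf (t : ℝ) : HasDerivAt (fun t : ℝ ↦ t * Real.exp (-t)) ((1 - t) * Real.exp (-t)) t :=
    ((hasDerivAt_id t).mul (hexp t)).congr_deriv (by simp only [id]; ring)
  have hf' (t : ℝ) :
      HasDerivAt (fun t : ℝ ↦ (1 - t) * Real.exp (-t)) ((t - 2) * Real.exp (-t)) t :=
    (((hasDerivAt_id t).const_sub 1).mul (hexp t)).congr_deriv (by simp only [id]; ring)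
  have hsum : ∑ a ∈ below A (Real.exp T), Real.log a / a =
      ∑ a ∈ below A (Real.exp T), Real.log a * Real.exp (-Real.log a) := by
    refine Finset.sum_congr rfl fun a ha ↦ ?_
    rw [Real.exp_neg, Real.exp_log (Nat.cast_pos.mpr (mem_below.mp ha).2.1), div_eq_mul_inv]
  rw [hsum, sum_below_eq_integral_rieszMean hf hf' (by fun_prop) hT, Real.exp_neg]
  ring

lemma integral_rieszMean_mul_le {η t₀ T : ℝ} (hη : η ≤ 2) (ht₀ : 2 ≤ t₀) (hT : t₀ ≤ T)
    (hA : ∀ t, t₀ ≤ t → rieszMean A (Real.exp t) ≤ Real.exp t * (1 / t + (2 - η) / t ^ 2)) :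
    ∫ t in t₀..T, rieszMean A (Real.exp t) * ((t - 2) * Real.exp (-t)) ≤
      T - t₀ - η * (Real.log T - Real.log t₀) := by
  have hpos {t : ℝ} (ht : t ∈ Set.Icc t₀ T) : 0 < t := by linarith [ht.1]
  have hinv : IntervalIntegrable (fun t : ℝ ↦ t⁻¹) MeasureTheory.volume t₀ T := by
    refine intervalIntegral.intervalIntegrable_inv (fun t ht ↦ ?_) continuousOn_id
    exact (hpos (Set.uIcc_of_le hT ▸ ht)).ne'
  have hrhs : ∫ t in t₀..T, (1 - η * t⁻¹) = T - t₀ - η * (Real.log T - Real.log t₀) := by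
    rw [intervalIntegral.integral_sub (by simp) (hinv.const_mul η),
      intervalIntegral.integral_const_mul, integral_inv_of_pos (by linarith) (by linarith),
      Real.log_div (by linarith) (by linarith)]
    simp
  rw [← hrhs]
  refine intervalIntegral.integral_mono_on hT
    ((continuous_rieszMean_exp.mul (by fun_prop)).intervalIntegrable _ _)
    ((by simp : IntervalIntegrable _ _ _ _).sub (hinv.const_mul η)) fun t ht ↦ ?_
  have ht0 := hpos ht
  have ht2 : 0 ≤ t - 2 := by linarith [ht.1]
  calc rieszMean A (Real.exp t) * ((t - 2) * Real.exp (-t))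
      ≤ Real.exp t * (1 / t + (2 - η) / t ^ 2) * ((t - 2) * Real.exp (-t)) := by
        gcongr
        exact hA t ht.1
    _ = 1 - η * t⁻¹ - 2 * (2 - η) / t ^ 2 := by
        rw [Real.exp_neg]
        field_simp
        ring
    _ ≤ 1 - η * t⁻¹ := by
        have : 0 ≤ 2 * (2 - η) / t ^ 2 := div_nonneg (by linarith) (sq_nonneg t)
        linarith

lemma sum_below_log_div_le {η t₀ T : ℝ} (hη : 0 ≤ η) (hη2 : η ≤ 2) (ht₀ : 2 ≤ t₀) (hT : t₀ ≤ T)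
    (hA : ∀ t, t₀ ≤ t → rieszMean A (Real.exp t) ≤ Real.exp t * (1 / t + (2 - η) / t ^ 2)) :
    ∑ a ∈ below A (Real.exp T), Real.log a / a ≤
      (below A (Real.exp T)).card * T / Real.exp T + 2 +
        (∫ t in 0..t₀, rieszMean A (Real.exp t) * ((t - 2) * Real.exp (-t))) +
        (T - t₀ - η * (Real.log T - Real.log t₀)) := by
  have hT0 : 0 < T := by linarith
  have hriesz : rieszMean A (Real.exp T) * (T - 1) / Real.exp T ≤ 2 := by
    have hT1 : 0 ≤ T - 1 := by linarith
    calc rieszMean A (Real.exp T) * (T - 1) / Real.exp T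
        ≤ Real.exp T * (1 / T + (2 - η) / T ^ 2) * (T - 1) / Real.exp T := by
          gcongr
          exact hA T hT
      _ = (T + (2 - η)) * (T - 1) / T ^ 2 := by field_simp
      _ ≤ 2 := by
          rw [div_le_iff₀ (by positivity)]
          nlinarith [sq_nonneg (T - 1)]
  have hint (a b : ℝ) : IntervalIntegrable (fun t ↦ rieszMean A (Real.exp t) *
      ((t - 2) * Real.exp (-t))) MeasureTheory.volume a b :=
    (continuous_rieszMean_exp.mul (by fun_prop)).intervalIntegrable _ _
  rw [sum_below_log_div_eq hT0.le,
    ← intervalIntegral.integral_add_adjacent_intervals (hint 0 t₀) (hint t₀ T)]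
  linarith [integral_rieszMean_mul_le hη2 ht₀ hT hA]

-- If the bound failed from `exp t₀` on, `∑_{a ≤ exp T} log a / a` would be at most
-- `T - η * log T + O(1)`.
theorem frequently_le_rieszMean {K C η : ℝ} (hη : 0 < η) (hη2 : η ≤ 2)
    (hlog : ∀ᶠ x in atTop, Real.log x - K ≤ ∑ a ∈ below A x, Real.log a / a)
    (hcard : ∀ᶠ x in atTop, ((below A x).card : ℝ) ≤ C * x / Real.log x) :
    ∃ᶠ x in atTop, x / Real.log x + (2 - η) * x / Real.log x ^ 2 ≤ rieszMean A x := by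
  intro hsmall
  obtain ⟨t₀, ht₀, hA⟩ : ∃ t₀, 2 ≤ t₀ ∧ ∀ t, t₀ ≤ t →
      rieszMean A (Real.exp t) ≤ Real.exp t * (1 / t + (2 - η) / t ^ 2) := by
    obtain ⟨t₁, ht₁⟩ := eventually_atTop.mp (Real.tendsto_exp_atTop.eventually hsmall)
    refine ⟨max 2 t₁, le_max_left _ _, fun t ht ↦ ?_⟩
    refine (not_le.mp (ht₁ t (le_of_max_le_right ht))).le.trans_eq ?_
    rw [Real.log_exp]
    ring
  set I := ∫ t in 0..t₀, rieszMean A (Real.exp t) * ((t - 2) * Real.exp (-t))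
  have hbound : ∀ᶠ T in atTop, Real.log T ≤ (K + C + 2 + I - t₀ + η * Real.log t₀) / η := by
    filter_upwards [Real.tendsto_exp_atTop.eventually hlog, Real.tendsto_exp_atTop.eventually hcard,
      eventually_ge_atTop t₀] with T hlogT hcardT hT
    have hcount : (below A (Real.exp T)).card * T / Real.exp T ≤ C := by
      rwa [div_le_iff₀ (Real.exp_pos T), ← le_div_iff₀ (by linarith), ← Real.log_exp T,
        Real.exp_log (Real.exp_pos T)]
    rw [Real.log_exp] at hlogT
    rw [le_div_iff₀ hη]
    linarith [sum_below_log_div_le hη.le hη2 ht₀ hT hA]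
  obtain ⟨T, hle, hlt⟩ := (hbound.and (Real.tendsto_log_atTop.eventually_gt_atTop
    ((K + C + 2 + I - t₀ + η * Real.log t₀) / η))).exists
  exact hle.not_gt hlt

end RieszMean

section OddPrimes

open Filter

lemma eventually_log_pow_le_mul (k : ℕ) {ε : ℝ} (hε : 0 < ε) :
    ∀ᶠ x in atTop, Real.log x ^ k ≤ ε * x := by
  filter_upwards [(Real.isLittleO_pow_log_id_atTop (n := k)).bound hε, eventually_gt_atTop 0]
    with x hx hx0
  exact (le_abs_self _).trans (by simpa [abs_of_pos hx0] using hx)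

/-- The primes that do not divide the modulus `2 ^ m` of the congruence. -/
def oddPrimes : Set ℕ := {p | p.Prime ∧ p ≠ 2}

lemma below_oddPrimes (x : ℝ) : below oddPrimes x = ⌊x⌋₊.primesLE.erase 2 := by
  ext p
  rw [mem_below, Finset.mem_erase, Nat.mem_primesLE, oddPrimes, Set.mem_ofPred_eq]
  refine ⟨fun ⟨⟨hp, hp2⟩, _, hpx⟩ ↦ ⟨hp2, Nat.le_floor hpx, hp⟩,
    fun ⟨hp2, hpx, hp⟩ ↦ ⟨⟨hp, hp2⟩, hp.pos, (Nat.le_floor_iff' hp.ne_zero).mp hpx⟩⟩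

lemma two_mem_primesLE_floor {x : ℝ} (hx : 2 ≤ x) : 2 ∈ ⌊x⌋₊.primesLE :=
  Nat.mem_primesLE.mpr ⟨Nat.le_floor (by exact_mod_cast hx), Nat.prime_two⟩

lemma card_below_oddPrimes {x : ℝ} (hx : 2 ≤ x) :
    ((below oddPrimes x).card : ℝ) = Nat.primeCounting ⌊x⌋₊ - 1 := by
  rw [below_oddPrimes, Finset.cast_card_erase_of_mem (two_mem_primesLE_floor hx),
    Nat.primesLE_card_eq_primeCounting]

lemma exists_log_sub_le_sum_oddPrimes_log_div : ∃ K : ℝ, ∀ᶠ x in atTop,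
    Real.log x - K ≤ ∑ p ∈ below oddPrimes x, Real.log p / p := by
  obtain ⟨K, hK⟩ := exists_log_sub_le_sum_primesLE_log_div
  refine ⟨K + Real.log 2 / 2, ?_⟩
  filter_upwards [eventually_ge_atTop 2] with x hx
  have hsplit := Finset.add_sum_erase _ (fun p : ℕ ↦ Real.log p / p) (two_mem_primesLE_floor hx)
  rw [← below_oddPrimes] at hsplit
  simp only [Nat.cast_ofNat] at hsplit
  linarith [hK x (by linarith)]

lemma eventually_card_below_oddPrimes_le : ∀ᶠ x in atTop,
    ((below oddPrimes x).card : ℝ) ≤ (Real.log 4 + 1) * x / Real.log x := by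
  filter_upwards [Chebyshev.eventually_primeCounting_le one_pos, eventually_ge_atTop 2]
    with x hx hx2
  rw [card_below_oddPrimes hx2]
  linarith

lemma eventually_le_card_below_oddPrimes : ∀ᶠ x in atTop,
    x / (2 * Real.log x) ≤ ((below oddPrimes x).card : ℝ) := by
  filter_upwards [eventually_log_pow_le_mul 1 (show (0 : ℝ) < 1 / 30 by norm_num),
    Real.tendsto_log_atTop.eventually_ge_atTop 2, eventually_ge_atTop 100] with x hsmall hL hx
  rw [pow_one] at hsmall
  have hpi := Chebyshev.pi_ge' (show 1 < x by linarith)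
  have hlog : Real.log (x + 2) ≤ 2 * Real.log x := by
    have := Real.log_le_log (by linarith) (show x + 2 ≤ x ^ 2 by nlinarith)
    rwa [Real.log_pow] at this
  rw [card_below_oddPrimes (by linarith), div_le_iff₀ (by linarith)]
  rw [div_le_iff₀ (by linarith)] at hpi
  nlinarith [Real.log_two_gt_d9]

lemma tendsto_card_below_oddPrimes :
    Tendsto (fun x ↦ ((below oddPrimes x).card : ℝ)) atTop atTop := by
  refine tendsto_atTop_mono' _ ?_ Real.tendsto_log_atTop
  filter_upwards [eventually_le_card_below_oddPrimes, eventually_gt_atTop 1,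
    eventually_log_pow_le_mul 2 (show (0 : ℝ) < 1 / 2 by norm_num)] with x hcard hx hlog
  refine le_trans ?_ hcard
  rw [le_div_iff₀ (mul_pos two_pos (Real.log_pos hx))]
  linarith

lemma sum_oddPrimes_log_add_log_log_nonneg (x : ℝ) :
    0 ≤ ∑ p ∈ below oddPrimes x, (Real.log p + Real.log (Real.log p)) := by
  refine Finset.sum_nonneg fun p hp ↦ ?_
  obtain ⟨⟨hp, hp2⟩, -⟩ := mem_below.mp hp
  have hp3 : (3 : ℝ) ≤ p := by exact_mod_cast hp.two_le.lt_of_ne' hp2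
  have hlog : 1 ≤ Real.log p :=
    (Real.le_log_iff_exp_le (by linarith)).mpr (Real.exp_one_lt_three.le.trans hp3)
  linarith [Real.log_nonneg hlog]

-- The tangent line of `log + log ∘ log` at `x`, in the variable `log`.
lemma log_add_log_log_le {a x : ℝ} (ha : 1 < a) (hx : 1 < x) :
    Real.log a + Real.log (Real.log a) ≤ Real.log x + Real.log (Real.log x) -
      (Real.log x - Real.log a) * (1 + 1 / Real.log x) := by
  have hla : 0 < Real.log a := Real.log_pos ha
  have hlx : 0 < Real.log x := Real.log_pos hx
  have htangent := Real.log_le_sub_one_of_pos (div_pos hla hlx)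
  rw [Real.log_div hla.ne' hlx.ne'] at htangent
  have : (Real.log x - Real.log a) * (1 + 1 / Real.log x) =
      Real.log x - Real.log a - (Real.log a / Real.log x - 1) := by
    field_simp
    ring
  linarith

lemma sum_log_add_log_log_le {A : Set ℕ} (hA : ∀ a ∈ A, 1 < a) {x : ℝ} (hx : 1 < x) :
    ∑ a ∈ below A x, (Real.log a + Real.log (Real.log a)) ≤
      (below A x).card * (Real.log x + Real.log (Real.log x)) -
        rieszMean A x * (1 + 1 / Real.log x) := by
  rw [rieszMean, Finset.sum_mul, ← nsmul_eq_mul, ← Finset.sum_const, ← Finset.sum_sub_distrib]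
  exact Finset.sum_le_sum fun a ha ↦
    log_add_log_log_le (by exact_mod_cast hA a (mem_below.mp ha).1) hx

theorem frequently_sum_oddPrimes_log_add_log_log_le {η : ℝ} (hη : 0 < η) (hη2 : η ≤ 2) :
    ∃ᶠ x in atTop, ∑ p ∈ below oddPrimes x, (Real.log p + Real.log (Real.log p)) ≤
      (below oddPrimes x).card * (Real.log x + Real.log (Real.log x)) -
        x / Real.log x * (1 + (3 - η) / Real.log x) := by
  obtain ⟨K, hK⟩ := exists_log_sub_le_sum_oddPrimes_log_div
  refine ((frequently_le_rieszMean hη hη2 hK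
    eventually_card_below_oddPrimes_le).and_eventually (eventually_gt_atTop 1)).mono ?_
  rintro x ⟨hJ, hx⟩
  have hL : 0 < Real.log x := Real.log_pos hx
  have hsum := sum_log_add_log_log_le (A := oddPrimes) (fun p hp ↦ hp.1.one_lt) hx
  have hJ' : x / Real.log x * (1 + (3 - η) / Real.log x) ≤
      rieszMean oddPrimes x * (1 + 1 / Real.log x) := calc
    _ ≤ (x / Real.log x + (2 - η) * x / Real.log x ^ 2) * (1 + 1 / Real.log x) := by
      have : 0 ≤ (2 - η) * x / Real.log x ^ 3 := by
        have : 0 ≤ 2 - η := by linarith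
        positivity
      refine le_of_sub_nonneg (this.trans_eq ?_)
      field_simp
      ring
    _ ≤ _ := by gcongr
  linarith

lemma eventually_add_mul_log_le (A D : ℝ) {η : ℝ} (hη : 0 < η) :
    ∀ᶠ x in atTop, A + D * Real.log x ≤ η * x / Real.log x ^ 2 := by
  filter_upwards [eventually_log_pow_le_mul 4 hη, Real.tendsto_log_atTop.eventually_ge_atTop 1,
    Real.tendsto_log_atTop.eventually_ge_atTop (|A| + |D|)] with x hx hL hAD
  rw [le_div_iff₀ (by positivity)]
  refine le_trans ?_ hx
  have hA : A ≤ |A| * Real.log x := (le_abs_self A).trans (le_mul_of_one_le_right (abs_nonneg A) hL)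
  have hD : D * Real.log x ≤ |D| * Real.log x := by gcongr; exact le_abs_self D
  calc (A + D * Real.log x) * Real.log x ^ 2
      ≤ ((|A| + |D|) * Real.log x) * Real.log x ^ 2 := by gcongr; linarith
    _ ≤ (Real.log x * Real.log x) * Real.log x ^ 2 := by gcongr
    _ = Real.log x ^ 4 := by ring

lemma eventually_div_sub_sq_le {b ρ : ℝ} (hb : 2 * ρ < b) :
    ∀ᶠ L in atTop, L / (L - ρ) ^ 2 ≤ (1 + b / L) / L := by
  filter_upwards [eventually_gt_atTop 0, eventually_gt_atTop ρ, eventually_ge_atTop (-b),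
    eventually_ge_atTop (2 * ρ * b / (b - 2 * ρ))] with L hL hρL hbL hL'
  rw [div_le_iff₀ (sub_pos.mpr hb)] at hL'
  have hform : (1 + b / L) / L = (L + b) / L ^ 2 := by field_simp
  rw [hform, div_le_div_iff₀ (pow_pos (sub_pos.mpr hρL) 2) (by positivity)]
  have hcubic : (L + b) * (L - ρ) ^ 2 - L * L ^ 2 =
      L * (L * (b - 2 * ρ) - 2 * ρ * b) + ρ ^ 2 * (L + b) := by ring
  linarith [hcubic, mul_nonneg hL.le (sub_nonneg.mpr hL'),
    mul_nonneg (sq_nonneg ρ) (neg_le_iff_add_nonneg.mp hbL)]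

theorem frequently_sum_oddPrimes_add_le {ρ : ℝ} (hρ0 : 0 ≤ ρ) (hρ : ρ < 3 / 2) (A D : ℝ) :
    ∃ᶠ x in atTop, ∑ p ∈ below oddPrimes x, (Real.log p + Real.log (Real.log p)) + A +
        D * Real.log x ≤
      (below oddPrimes x).card * (Real.log x + Real.log (Real.log x)) -
        x * (Real.log x / (Real.log x - ρ) ^ 2) := by
  set η := (3 - 2 * ρ) / 4 with hη
  have hη0 : 0 < η := by linarith
  refine ((frequently_sum_oddPrimes_log_add_log_log_le hη0 (by linarith)).and_eventually
    ((eventually_add_mul_log_le A D hη0).and ((Real.tendsto_log_atTop.eventually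
      (eventually_div_sub_sq_le (b := 3 - 2 * η) (ρ := ρ) (by linarith))).and
        (eventually_ge_atTop 0)))).mono ?_
  rintro x ⟨hsum, hlower, hρ, hx⟩
  have hx' := mul_le_mul_of_nonneg_left hρ hx
  have hsplit : x / Real.log x * (1 + (3 - η) / Real.log x) =
      x * ((1 + (3 - 2 * η) / Real.log x) / Real.log x) + η * x / Real.log x ^ 2 := by ring
  linarith

end OddPrimes

section Optimization

lemma exp_neg_le_one_sub_half {z : ℝ} (hz : 0 ≤ z) (hz1 : z ≤ 1) :
    Real.exp (-z) ≤ 1 - z / 2 := by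
  rw [Real.exp_neg]
  refine inv_le_of_inv_le₀ (by linarith) (le_trans ?_ (Real.add_one_le_exp z))
  rw [inv_le_iff_one_le_mul₀ (by linarith)]
  nlinarith

lemma mul_sub_le_sub_one_sub_log {c w : ℝ} (hc : c < 1) (hw : 0 < w) :
    c * w - c / (1 - c) ≤ w - 1 - Real.log w := by
  have hc1 : 0 < 1 - c := sub_pos.mpr hc
  have htangent := Real.log_le_sub_one_of_pos (mul_pos hc1 hw)
  rw [Real.log_mul hc1.ne' hw.ne'] at htangent
  have hlog := Real.one_sub_inv_le_log_of_pos hc1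
  have hinv : 1 - (1 - c)⁻¹ = -(c / (1 - c)) := by
    field_simp
    ring
  linarith

lemma sqrt_mul_exp_one_sub {w : ℝ} (hw : 0 < w) :
    √(w * Real.exp (1 - w)) = Real.exp (-((w - 1 - Real.log w) / 2)) := by
  rw [← Real.exp_log hw, ← Real.exp_add, Real.log_exp, Real.exp_log hw, ← Real.exp_half]
  ring_nf

lemma sqrt_mul_exp_one_sub_le {L w : ℝ} (hL : 8 ≤ L) (hw : 0 < w) (hw3 : w ≤ 3) :
    √(w * Real.exp (1 - w)) ≤ 1 - (w - 1) / L + 8 / L ^ 2 := by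
  have hlog : 0 ≤ w - 1 - Real.log w := by linarith [Real.log_le_sub_one_of_pos hw]
  rw [sqrt_mul_exp_one_sub hw]
  rcases le_total w 1 with hw1 | hw1
  · have hdiv : (w - 1) / L ≤ 0 := div_nonpos_of_nonpos_of_nonneg (by linarith) (by linarith)
    have hexp : Real.exp (-((w - 1 - Real.log w) / 2)) ≤ 1 := Real.exp_le_one_iff.mpr (by linarith)
    have : 0 ≤ 8 / L ^ 2 := by positivity
    linarith
  · have hlog1 : 0 ≤ Real.log w := Real.log_nonneg hw1
    have hexp := exp_neg_le_one_sub_half (z := (w - 1 - Real.log w) / 2) (by linarith) (by linarith)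
    have htangent := mul_sub_le_sub_one_sub_log (c := 4 / L)
      (by rw [div_lt_one (by linarith)]; linarith) hw
    have hconst : 4 / L / (1 - 4 / L) ≤ 4 / L + 32 / L ^ 2 := by
      have h4 : 0 < L - 4 := by linarith
      have hform : 4 / L / (1 - 4 / L) = 4 / (L - 4) := by field_simp
      rw [hform, div_add_div _ _ (by linarith) (by positivity), div_le_div_iff₀ h4 (by positivity)]
      nlinarith [mul_nonneg (show 0 ≤ L by linarith) (show 0 ≤ L - 8 by linarith)]
    have hsplit : 4 / L * w - (4 / L + 32 / L ^ 2) = 4 * ((w - 1) / L - 8 / L ^ 2) := by ring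
    linarith

lemma two_mul_sub_mul_sqrt_le {γ ρ L w : ℝ} (hρ : 0 ≤ ρ) (hL : 8 ≤ L) (hρL : ρ ≤ L)
    (hγ : (3 - 2 * ρ - γ) * L + 4 * ρ + 16 ≤ 0) (hw : 0 < w) (hw3 : w ≤ 3) :
    2 * (L - ρ) * √(w * Real.exp (1 - w)) ≤ 2 * L + γ - 1 - 2 * w := by
  have hL0 : 0 < L := by linarith
  have hsmall : 3 - 2 * ρ - γ + (4 * ρ + 16) / L ≤ 0 := by
    rw [← mul_le_mul_iff_left₀ hL0]
    field_simp
    linarith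
  have hρw : ρ * w / L ≤ ρ * 3 / L := by gcongr
  have hρ16 : 0 ≤ 16 * ρ / L ^ 2 := by positivity
  calc 2 * (L - ρ) * √(w * Real.exp (1 - w))
      ≤ 2 * (L - ρ) * (1 - (w - 1) / L + 8 / L ^ 2) :=
        mul_le_mul_of_nonneg_left (sqrt_mul_exp_one_sub_le hL hw hw3) (by linarith)
    _ = 2 * L + 2 - 2 * ρ - 2 * w + (16 - 2 * ρ) / L + 2 * (ρ * w / L) - 16 * ρ / L ^ 2 := by
        field_simp
        ring
    _ ≤ 2 * L + 2 - 2 * ρ - 2 * w + (16 - 2 * ρ) / L + 2 * (ρ * 3 / L) := by linarith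
    _ = 2 * L + γ - 1 - 2 * w + (3 - 2 * ρ - γ + (4 * ρ + 16) / L) := by ring
    _ ≤ 2 * L + γ - 1 - 2 * w := by linarith

lemma sqrt_le_mul_log_of_le {k m y Y : ℝ} (hy : Real.exp 2 ≤ y) (hyY : y ≤ Y)
    (hY : √(k * Y) ≤ m * Real.log Y) : √(k * y) ≤ m * Real.log y := by
  have hy0 : 0 < y := (Real.exp_pos 2).trans_le hy
  have hY0 : 0 < Y := hy0.trans_le hyY
  have hanti := Real.log_div_sqrt_antitoneOn hy (hy.trans hyY) hyY
  have hlogY : 0 < Real.log Y :=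
    Real.log_pos ((Real.one_lt_exp_iff.mpr two_pos).trans_le (hy.trans hyY))
  have hm : 0 ≤ m := nonneg_of_mul_nonneg_left ((Real.sqrt_nonneg _).trans hY) hlogY
  rw [Real.sqrt_mul' k hY0.le, ← le_div_iff₀ (Real.sqrt_pos.mpr hY0)] at hY
  rw [Real.sqrt_mul' k hy0.le, ← le_div_iff₀ (Real.sqrt_pos.mpr hy0)]
  calc √k ≤ m * (Real.log Y / √Y) := hY.trans_eq (mul_div_assoc _ _ _)
    _ ≤ m * (Real.log y / √y) := mul_le_mul_of_nonneg_left hanti hm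
    _ = m * Real.log y / √y := (mul_div_assoc _ _ _).symm

/-- The bound on the `ℓ¹` norm of the short vector for `n` primes with `S = ∑ (log p + log log p)`,
gain `exp (2 * n)` over the radical, and entry `x ^ 3` in the last coordinate of the lattice. -/
noncomputable def normBound (δ C x n S : ℝ) : ℝ :=
  ((n + 1) / δ + C * Real.log (n + 1)) * Real.exp ((3 * Real.log x + S + 2 * n) / (n + 1))

lemma normBound_div_two_add_log_two_le {δ C x n S : ℝ} (hδ : 0 < δ) (hC : 0 ≤ C) (hx : 1 ≤ x)
    (hn : 0 < n) (hS : 0 ≤ S) (hnx : Real.log (n + 1) ≤ 2 * Real.log x) :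
    normBound δ C x n S / 2 + Real.log 2 ≤
      n / (2 * δ) * Real.exp (2 + (S + (1 + 2 * δ) + (2 * δ * C + 3) * Real.log x) / n) := by
  have hlogx : 0 ≤ Real.log x := Real.log_nonneg hx
  set X := (3 * Real.log x + S) / n + 2
  have hexponent : (3 * Real.log x + S + 2 * n) / (n + 1) ≤ X := calc
    _ ≤ (3 * Real.log x + S + 2 * n) / n := by gcongr; linarith
    _ = X := by rw [add_div, mul_div_cancel_right₀ _ hn.ne']
  have hlogtwo : Real.log 2 ≤ Real.exp X :=
    (Real.log_two_lt_d9.le.trans (by norm_num)).trans (Real.one_le_exp (by positivity))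
  calc normBound δ C x n S / 2 + Real.log 2
      ≤ ((n + 1) / δ + C * (2 * Real.log x)) * Real.exp X / 2 + Real.exp X := by
        rw [normBound]
        gcongr
    _ = n / (2 * δ) * ((((1 + 2 * δ) + 2 * δ * C * Real.log x) / n + 1) * Real.exp X) := by
        field_simp
        ring
    _ ≤ n / (2 * δ) * (Real.exp (((1 + 2 * δ) + 2 * δ * C * Real.log x) / n) * Real.exp X) := by
        gcongr
        exact Real.add_one_le_exp _
    _ = n / (2 * δ) * Real.exp (2 + (S + (1 + 2 * δ) + (2 * δ * C + 3) * Real.log x) / n) := by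
        rw [← Real.exp_add]
        congr 2
        ring

lemma normBound_div_two_add_log_two_le_of_le {δ C x n S w : ℝ} (hδ : 0 < δ) (hC : 0 ≤ C)
    (hx : 2 ≤ x) (hn : 0 < n) (hnx : n ≤ x) (hS0 : 0 ≤ S)
    (hS : S + (1 + 2 * δ) + (2 * δ * C + 3) * Real.log x ≤
      n * (Real.log x + Real.log (Real.log x)) - n * w) :
    normBound δ C x n S / 2 + Real.log 2 ≤
      n / (2 * δ) * Real.exp (2 + Real.log x + Real.log (Real.log x) - w) := by
  have hlog : Real.log (n + 1) ≤ 2 * Real.log x := by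
    have := Real.log_le_log (by linarith) (show n + 1 ≤ x ^ 2 by nlinarith)
    rwa [Real.log_pow] at this
  refine (normBound_div_two_add_log_two_le hδ hC (by linarith) hn hS0 hlog).trans ?_
  rw [add_assoc 2, add_sub_assoc]
  gcongr
  rw [div_le_iff₀' hn]
  linarith

lemma mul_exp_le_pow_three {δ n w x : ℝ} (hδ : 0 < δ) (hx : 1 < x) (hnx : n ≤ x)
    (hw : 0 ≤ w) (hδx : Real.exp 2 * Real.log x ≤ δ * x) :
    2 * (n / (2 * δ) * Real.exp (2 + Real.log x + Real.log (Real.log x) - w)) ≤ x ^ 3 := by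
  have hx0 : 0 < x := by linarith
  have hL : 0 < Real.log x := Real.log_pos hx
  calc 2 * (n / (2 * δ) * Real.exp (2 + Real.log x + Real.log (Real.log x) - w))
      ≤ 2 * (x / (2 * δ) * Real.exp (2 + Real.log x + Real.log (Real.log x))) := by
        gcongr
        linarith
    _ = x ^ 2 / δ * (Real.exp 2 * Real.log x) := by
        rw [Real.exp_add, Real.exp_add, Real.exp_log hx0, Real.exp_log hL]
        field_simp
    _ ≤ x ^ 2 / δ * (δ * x) := by gcongr
    _ = x ^ 3 := by field_simp

lemma four_mul_sqrt_le_two_mul_log {δ ρ L n w : ℝ} (hδ : 0 < δ) (hρ : 0 ≤ ρ) (hρL : ρ < L)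
    (hn : 0 < n) (hw : 0 < w) (hnw : n * w * (L - ρ) ^ 2 = Real.exp L * L)
    (hsqrt : 2 * (L - ρ) * √(w * Real.exp (1 - w)) ≤ 2 * L + (4 - Real.log (2 * δ)) - 1 - 2 * w) :
    4 * √(2 * (δ / Real.exp 1) * (n / (2 * δ) * Real.exp (2 + L + Real.log L - w))) ≤
      2 * n * Real.log (n / (2 * δ) * Real.exp (2 + L + Real.log L - w)) := by
  have hL : 0 < L := hρ.trans_lt hρL
  have hLρ : 0 < L - ρ := sub_pos.mpr hρL
  have hsq : 2 * (δ / Real.exp 1) * (n / (2 * δ) * Real.exp (2 + L + Real.log L - w)) =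
      (n * (L - ρ)) ^ 2 * (w * Real.exp (1 - w)) := by
    have hexp : Real.exp (2 + L + Real.log L - w) =
        Real.exp 1 * (Real.exp L * L) * Real.exp (1 - w) := by
      nth_rewrite 4 [← Real.exp_log hL]
      rw [← Real.exp_add, ← Real.exp_add, ← Real.exp_add]
      ring_nf
    rw [hexp, ← hnw]
    field_simp
  have hlogn : Real.log n + Real.log w + 2 * Real.log (L - ρ) = L + Real.log L := by
    have := congrArg Real.log hnw
    rwa [Real.log_mul (by positivity) (by positivity), Real.log_mul hn.ne' hw.ne', Real.log_pow,
      Real.log_mul (Real.exp_pos L).ne' hL.ne', Real.log_exp, Nat.cast_ofNat] at this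
  have hlog : 2 * L + (4 - Real.log (2 * δ)) - 1 - 2 * w ≤
      Real.log (n / (2 * δ) * Real.exp (2 + L + Real.log L - w)) := by
    rw [Real.log_mul (by positivity) (Real.exp_pos _).ne', Real.log_exp,
      Real.log_div hn.ne' (by positivity)]
    linarith [Real.log_le_sub_one_of_pos hw, Real.log_le_log hLρ (sub_le_self L hρ)]
  rw [hsq, Real.sqrt_mul (by positivity), Real.sqrt_sq (by positivity)]
  calc 4 * (n * (L - ρ) * √(w * Real.exp (1 - w)))
      = 2 * n * (2 * (L - ρ) * √(w * Real.exp (1 - w))) := by ring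
    _ ≤ _ := mul_le_mul_of_nonneg_left (hsqrt.trans hlog) (by positivity)

lemma div_sub_sq_div_le_three {ρ L n x : ℝ} (hρ : ρ ≤ 3 / 2) (hL : 9 ≤ L) (hn : 0 < n)
    (hnx : x ≤ 2 * L * n) : x * (L / (L - ρ) ^ 2) / n ≤ 3 := by
  have hLρ : 0 < L - ρ := by linarith
  rw [div_le_iff₀ hn, mul_div_assoc', div_le_iff₀ (by positivity)]
  have hsq : 2 * L ^ 2 ≤ 3 * (L - ρ) ^ 2 := by
    nlinarith [pow_le_pow_left₀ (by linarith) (show 5 / 6 * L ≤ L - ρ by linarith) 2]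
  calc x * L ≤ 2 * L * n * L := by gcongr
    _ = n * (2 * L ^ 2) := by ring
    _ ≤ n * (3 * (L - ρ) ^ 2) := by gcongr
    _ = 3 * n * (L - ρ) ^ 2 := by ring

-- The bound is at most `Y = n / (2 * δ) * exp (2 + log x + log log x - w)`, where `w` is the saving
-- per prime, and at `Y` the inequality follows from `four_mul_sqrt_le_two_mul_log`.
lemma normBound_lt_and_four_mul_sqrt_le {δ C ρ x n S : ℝ} (hδ : 0 < δ) (hC : 0 ≤ C) (hρ0 : 0 ≤ ρ)
    (hρ : ρ ≤ 3 / 2) (hx : 2 ≤ x) (hL : 9 ≤ Real.log x)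
    (hρL : 4 * ρ + 16 ≤ Real.log x * (1 + 2 * ρ - Real.log (2 * δ)))
    (hδx : Real.exp 2 * Real.log x ≤ δ * x) (hxn : x / (2 * Real.log x) ≤ n) (hnx : n ≤ x)
    (hS0 : 0 ≤ S) (hS : S + (1 + 2 * δ) + (2 * δ * C + 3) * Real.log x ≤
      n * (Real.log x + Real.log (Real.log x)) - x * (Real.log x / (Real.log x - ρ) ^ 2)) :
    normBound δ C x n S < x ^ 3 ∧
      ∀ y, Real.exp 2 ≤ y → y ≤ normBound δ C x n S / 2 + Real.log 2 →
        4 * √(2 * (δ / Real.exp 1) * y) ≤ 2 * n * Real.log y := by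
  have hx0 : 0 < x := by linarith
  have hLρ : 0 < Real.log x - ρ := by linarith
  have hn : 0 < n := lt_of_lt_of_le (by positivity) hxn
  set w := x * (Real.log x / (Real.log x - ρ) ^ 2) / n with hw
  have hw0 : 0 < w := by positivity
  have hw3 : w ≤ 3 :=
    div_sub_sq_div_le_three hρ hL hn ((div_le_iff₀' (by positivity)).mp hxn)
  set Y := n / (2 * δ) * Real.exp (2 + Real.log x + Real.log (Real.log x) - w)
  have hBY : normBound δ C x n S / 2 + Real.log 2 ≤ Y :=
    normBound_div_two_add_log_two_le_of_le hδ hC hx hn hnx hS0 (by rwa [mul_div_cancel₀ _ hn.ne'])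
  have hY3 : 2 * Y ≤ x ^ 3 := mul_exp_le_pow_three hδ (by linarith) hnx hw0.le hδx
  refine ⟨by linarith [Real.log_pos one_lt_two], fun y hy hyB ↦ ?_⟩
  have hY : 4 * √(2 * (δ / Real.exp 1) * Y) ≤ 2 * n * Real.log Y := by
    refine four_mul_sqrt_le_two_mul_log hδ hρ0 (by linarith) hn hw0 ?_
      (two_mul_sub_mul_sqrt_le hρ0 (by linarith) (by linarith) (by linarith) hw0 hw3)
    rw [Real.exp_log hx0, hw]
    field_simp
  have hy' := sqrt_le_mul_log_of_le (k := 2 * (δ / Real.exp 1)) (m := n / 2) hy (hyB.trans hBY)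
    (by linarith)
  linarith

end Optimization

section Asymptotics

open Filter

-- A loss `ρ < 3 / 2` with `log (2 * δ) < 1 + 2 * ρ` exists because `2 * δ < e ^ 4`.
theorem frequently_normBound_lt_and_four_mul_sqrt_le {δ C : ℝ} (hδ : 0 < δ) (hC : 0 ≤ C)
    (hδe : 2 * δ < Real.exp 1 ^ 4) :
    ∃ᶠ x in atTop,
      normBound δ C x (below oddPrimes x).card
        (∑ p ∈ below oddPrimes x, (Real.log p + Real.log (Real.log p))) < x ^ 3 ∧
      ∀ y, Real.exp 2 ≤ y → y ≤ normBound δ C x (below oddPrimes x).card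
        (∑ p ∈ below oddPrimes x, (Real.log p + Real.log (Real.log p))) / 2 + Real.log 2 →
          4 * √(2 * (δ / Real.exp 1) * y) ≤ 2 * (below oddPrimes x).card * Real.log y := by
  have hlogδ : Real.log (2 * δ) < 4 := by
    have := Real.log_lt_log (by linarith) hδe
    rwa [Real.log_pow, Real.log_exp, Nat.cast_ofNat, mul_one] at this
  obtain ⟨ρ, hρ, hρ32⟩ := exists_between (show max 0 ((Real.log (2 * δ) - 1) / 2) < 3 / 2 from
    max_lt (by norm_num) (by linarith))
  obtain ⟨hρ0, hρδ⟩ := max_lt_iff.mp hρ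
  have hlarge : ∀ᶠ x in atTop, 2 ≤ x ∧ 9 ≤ Real.log x ∧
      (4 * ρ + 16) / (1 + 2 * ρ - Real.log (2 * δ)) ≤ Real.log x ∧
      Real.log x ^ 1 ≤ δ / Real.exp 2 * x ∧ x / (2 * Real.log x) ≤ (below oddPrimes x).card :=
    (eventually_ge_atTop 2).and <| (Real.tendsto_log_atTop.eventually_ge_atTop 9).and <|
      (Real.tendsto_log_atTop.eventually_ge_atTop _).and <|
      (eventually_log_pow_le_mul 1 (by positivity)).and eventually_le_card_below_oddPrimes
  refine ((frequently_sum_oddPrimes_add_le hρ0.le hρ32 (1 + 2 * δ) (2 * δ * C + 3)).and_eventually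
    hlarge).mono ?_
  rintro x ⟨hsum, hx, hL, hρL, hδx, hcard⟩
  rw [div_le_iff₀ (by linarith)] at hρL
  rw [pow_one, div_mul_eq_mul_div, le_div_iff₀' (Real.exp_pos 2)] at hδx
  exact normBound_lt_and_four_mul_sqrt_le hδ hC hρ0.le hρ32.le hx hL hρL hδx hcard
    (card_below_le (by linarith)) (sum_oddPrimes_log_add_log_log_nonneg x) hsum

end Asymptotics

/-- If `δ > 0` and `C ≥ 0` are constants with `2δ < e⁴` such that every full-rank
lattice `L` in `ℝⁿ` (the ℤ-span of an ℝ-basis, given by the rows `b` of a matrix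
with nonzero determinant) contains a nonzero vector `x` with
`‖x‖₁ ≤ (n/δ + C·log n)·det(L)^(1/n)`, then there are infinitely many abc triples
with `exp (4·√(2(δ/e)·log c) / log log c) · rad(abc) ≤ c`. -/
theorem abc_lower_bound_of_lattice_bound (δ C : ℝ) (hδ : 0 < δ) (hC : 0 ≤ C)
    (hδe : 2 * δ < Real.exp 1 ^ 4)
    (hlat : ∀ n : ℕ, 1 ≤ n → ∀ b : Fin n → Fin n → ℝ, (Matrix.of b).det ≠ 0 →
      ∃ x ∈ Submodule.span ℤ (Set.range b), x ≠ 0 ∧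
        ∑ i, |x i| ≤ ((n : ℝ) / δ + C * Real.log n) * |(Matrix.of b).det| ^ ((1 : ℝ) / n)) :
    ∀ N : ℝ, ∃ a b c : ℕ, 0 < a ∧ 0 < b ∧ 0 < c ∧ Nat.gcd a b = 1 ∧ a + b = c ∧ (c : ℝ) > N ∧
      Real.exp (4 * Real.sqrt (2 * (δ / Real.exp 1) * Real.log c) / Real.log (Real.log c)) *
        (rad (a * b * c) : ℝ) ≤ (c : ℝ) := by
  intro N
  obtain ⟨x, ⟨hlt, hsqrt⟩, hx, hcard⟩ :=
    ((frequently_normBound_lt_and_four_mul_sqrt_le hδ hC hδe).and_eventually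
      ((Filter.eventually_gt_atTop 0).and (tendsto_card_below_oddPrimes.eventually_ge_atTop
        (max (Real.exp 2) N)))).exists
  have hF : ShortVectorBound fun n ↦ n / δ + C * Real.log n := hlat
  obtain ⟨a, b, c, habc, hG, hlogc, hrad⟩ := hF.exists_abcTriple_exp_mul_rad_le
    (P := below oddPrimes x) (fun p hp ↦ (mem_below.mp hp).1)
    (G := 2 * (below oddPrimes x).card) (by positivity) (by positivity)
    (by rw [Nat.cast_add_one, Real.log_pow]; exact le_rfl)
    (pow_pos hx 3) hlt
  have hlogc_ge : max (Real.exp 2) N ≤ Real.log c := by linarith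
  have hexp2 : Real.exp 2 ≤ Real.log c := le_of_max_le_left hlogc_ge
  have hc : 0 < c := habc.add_eq ▸ Nat.add_pos_left habc.left_pos b
  have hlogc_lt : Real.log c < c := by
    linarith [Real.log_le_sub_one_of_pos (show (0 : ℝ) < c by exact_mod_cast hc)]
  have hloglog : 0 < Real.log (Real.log c) :=
    Real.log_pos ((Real.one_lt_exp_iff.mpr two_pos).trans_le hexp2)
  refine ⟨a, b, c, habc.left_pos, habc.right_pos, hc, habc.coprime, habc.add_eq,
    (le_of_max_le_right hlogc_ge).trans_lt hlogc_lt, le_trans ?_ hrad⟩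
  gcongr
  exact (div_le_iff₀ hloglog).mpr (hsqrt _ hexp2 hlogc)
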